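/- Let g_1,…,g_m ∈ ℝ[x_1,…,x_n] and let V = {x ∈ ℝ^n : g_j(x) = 0 for j = 1,…,m}. Let f ∈ ℝ[x_1,…,x_n] be nonnegative on V. Then for every ε > 0 there exist r(ε) ∈ ℕ and nonnegative real scalars λ_1,…,λ_m such that, for every r ≥ r(ε), the polynomial f + ε·θ_r + ∑_{j=1}^m λ_j·g_j^2 is a sum of squares of real polynomials. -/

import Mathlib

open MvPolynomial MeasureTheory Filter Topology

/-- `θ_r(x) = ∑_{k=0}^r ∑_{i=1}^n x_i^{2k}/k!` as a polynomial in `ℝ[x_1,…,x_n]`. -/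
noncomputable def theta (n r : ℕ) : MvPolynomial (Fin n) ℝ :=
  ∑ k ∈ Finset.range (r + 1), ∑ i : Fin n,
    C ((1 : ℝ) / (Nat.factorial k : ℝ)) * X i ^ (2 * k)

/-- A polynomial is a sum of squares if it is a finite sum of squares of polynomials. -/
def IsSOS {n : ℕ} (p : MvPolynomial (Fin n) ℝ) : Prop :=
  ∃ (k : ℕ) (q : Fin k → MvPolynomial (Fin n) ℝ), p = ∑ i, q i ^ 2

/-!
A penalty `c ∑ⱼ gⱼ²` repairs `f + (ε/2) θ_s` on the compact set where it is negative, since that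
set is disjoint from `V`; this leaves a globally nonnegative polynomial `F`, and it remains to
make `F + (ε/2) θ_r` a sum of squares for large `r`. For an entire kernel `h`, expand both factors
`h (yᵢ - xᵢ)` of `∫ F(y) ∏ᵢ h (yᵢ - xᵢ)² dy` in powers of `x` and truncate at degree `r`. The
result is a Gram matrix of the positive functional `u ↦ ∫ F u` evaluated at monomials, hence a sum
of squares. As `h²` concentrates at `0`, its coefficients approach those of `F` in a weighted `ℓ¹`
norm. The weights are chosen so that `θ_r` absorbs every monomial at a cost equal to its weight:
by rearrangement (Hurwitz) a product `∏ᵢ xᵢ ^ (2 kᵢ)` is dominated by pure powers up to sums of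
squares. A power of `sinc` serves as `h`: its derivatives grow only geometrically, so its Taylor
coefficients beat the weights.
-/

section SumsOfSquares

variable {R ι : Type*} [CommRing R]

lemma isSumSq_pow {s : R} (hs : IsSumSq s) (k : ℕ) : IsSumSq (s ^ k) := by
  simpa only [Subsemiring.mem_sumSq] using pow_mem (S := Subsemiring.sumSq R) (by simpa) k

lemma isSumSq_rearrangement {s t : R} (hs : IsSumSq s) (ht : IsSumSq t) (a b : ℕ) :
    IsSumSq ((s ^ a - t ^ a) * (s ^ b - t ^ b)) := by
  have geom (k : ℕ) : IsSumSq (∑ i ∈ Finset.range k, s ^ i * t ^ (k - 1 - i)) :=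
    .sum fun i _ ↦ (isSumSq_pow hs _).mul (isSumSq_pow ht _)
  have factor : (s ^ a - t ^ a) * (s ^ b - t ^ b) =
      (s - t) * (s - t) * ((∑ i ∈ Finset.range a, s ^ i * t ^ (a - 1 - i)) *
        ∑ i ∈ Finset.range b, s ^ i * t ^ (b - 1 - i)) := by
    rw [← geom_sum₂_mul s t a, ← geom_sum₂_mul s t b]
    ring
  rw [factor]
  exact (IsSumSq.mul_self _).mul ((geom a).mul (geom b))

lemma isSumSq_pow_add_pow_sub_mul {s t : R} (hs : IsSumSq s) (ht : IsSumSq t) (a b : ℕ) :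
    IsSumSq (s ^ (a + b) + t ^ (a + b) - s ^ a * t ^ b) := by
  have split : s ^ (a + b) + t ^ (a + b) - s ^ a * t ^ b =
      s ^ b * t ^ a + (s ^ a - t ^ a) * (s ^ b - t ^ b) := by ring
  rw [split]
  exact ((isSumSq_pow hs b).mul (isSumSq_pow ht a)).add (isSumSq_rearrangement hs ht a b)

lemma isSumSq_sum_pow_sub_prod_pow {I : Finset ι} (hI : I.Nonempty) {t : ι → R}
    (ht : ∀ i, IsSumSq (t i)) (β : ι → ℕ) :
    IsSumSq ((I.card.factorial : R) * ∑ i ∈ I, t i ^ (∑ j ∈ I, β j) - ∏ i ∈ I, t i ^ β i) := by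
  induction hI using Finset.Nonempty.cons_induction with
  | singleton i => simp
  | cons a I ha _ ih =>
    set B := ∑ j ∈ I, β j
    set c := I.card
    have expand : ((c + 1).factorial : R) * (t a ^ (β a + B) + ∑ i ∈ I, t i ^ (β a + B))
        - t a ^ β a * ∏ i ∈ I, t i ^ β i =
        (c.factorial : R) * t a ^ (β a + B) + (c * c.factorial : ℕ) * ∑ i ∈ I, t i ^ (β a + B) +
        (c.factorial : R) * ∑ i ∈ I, (t a ^ (β a + B) + t i ^ (β a + B) - t a ^ β a * t i ^ B) +
        t a ^ β a * ((c.factorial : R) * ∑ i ∈ I, t i ^ B - ∏ i ∈ I, t i ^ β i) := by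
      simp only [Finset.sum_sub_distrib, Finset.sum_add_distrib, Finset.sum_const, nsmul_eq_mul,
        ← Finset.mul_sum, Nat.factorial_succ, Nat.cast_mul, Nat.cast_add, Nat.cast_one]
      ring
    rw [Finset.card_cons, Finset.sum_cons, Finset.sum_cons, Finset.prod_cons, expand]
    refine (((IsSumSq.natCast _).mul (isSumSq_pow (ht a) _)).add ?_ |>.add ?_).add ?_
    · exact (IsSumSq.natCast _).mul (.sum fun i _ ↦ isSumSq_pow (ht i) _)
    · exact (IsSumSq.natCast _).mul (.sum fun i _ ↦ isSumSq_pow_add_pow_sub_mul (ht a) (ht i) _ _)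
    · exact (isSumSq_pow (ht a) _).mul ih

end SumsOfSquares

lemma factorial_sum_le_prod_card_pow_mul {ι : Type*} [Fintype ι] (β : ι → ℕ) :
    (∑ i, β i).factorial ≤ ∏ i, Fintype.card ι ^ β i * (β i).factorial := by
  classical
  have multinomial_le : Nat.multinomial Finset.univ β ≤ Fintype.card ι ^ ∑ i, β i := by
    have expand := Finset.sum_pow_eq_sum_piAntidiag Finset.univ (fun _ : ι ↦ 1) (∑ i, β i)
    simp only [Finset.sum_const, Finset.card_univ, smul_eq_mul, mul_one, one_pow,
      Finset.prod_const_one] at expand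
    rw [expand]
    exact Finset.single_le_sum (f := Nat.multinomial Finset.univ) (fun _ _ ↦ Nat.zero_le _)
      (by simp : β ∈ Finset.univ.piAntidiag (∑ i, β i))
  calc (∑ i, β i).factorial
      = Nat.multinomial Finset.univ β * ∏ i, (β i).factorial := by
        rw [← Nat.multinomial_spec, mul_comm]
    _ ≤ Fintype.card ι ^ (∑ i, β i) * ∏ i, (β i).factorial := by gcongr
    _ = ∏ i, Fintype.card ι ^ β i * (β i).factorial := by
        rw [Finset.prod_mul_distrib, Finset.prod_pow_eq_pow_sum]

section Theta

variable {n : ℕ}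

lemma isSOS_of_isSumSq {p : MvPolynomial (Fin n) ℝ} (hp : IsSumSq p) : IsSOS p := by
  induction hp with
  | zero => exact ⟨0, Fin.elim0, by simp⟩
  | sq_add a _ ih =>
    obtain ⟨k, q, rfl⟩ := ih
    exact ⟨k + 1, Fin.cons a q, by simp [Fin.sum_univ_succ, sq]⟩

lemma isSumSq_C {σ : Type*} {c : ℝ} (hc : 0 ≤ c) : IsSumSq (C c : MvPolynomial σ ℝ) :=
  ((Real.isSquare_iff.mpr hc).map C).isSumSq

lemma isSumSq_sum_even_pow (c : ℕ → ℝ) (hc : ∀ k, 0 ≤ c k) (K : Finset ℕ) :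
    IsSumSq (∑ k ∈ K, ∑ i : Fin n, C (c k) * X i ^ (2 * k)) :=
  .sum fun k _ ↦ .sum fun i _ ↦
    (isSumSq_C (hc k)).mul ((even_two_mul k).isSquare_pow (X i)).isSumSq

lemma isSumSq_theta (r : ℕ) : IsSumSq (theta n r) :=
  isSumSq_sum_even_pow _ (fun _ ↦ by positivity) _

lemma isSumSq_theta_sub_theta {r s : ℕ} (h : r ≤ s) : IsSumSq (theta n s - theta n r) := by
  rw [theta, theta, ← Finset.sum_range_add_sum_Ico _ (Nat.succ_le_succ h), add_sub_cancel_left]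
  exact isSumSq_sum_even_pow _ (fun _ ↦ by positivity) _

lemma isSumSq_theta_sub_sum_pow {k r : ℕ} (hk : k ≤ r) :
    IsSumSq (C (k.factorial : ℝ) * theta n r - ∑ i : Fin n, (X i ^ 2) ^ k) := by
  have term : ∑ i : Fin n, (X i ^ 2) ^ k = C (k.factorial : ℝ) *
      ∑ i : Fin n, C ((1 : ℝ) / (k.factorial : ℝ)) * X i ^ (2 * k) := by
    rw [← Finset.mul_sum, ← mul_assoc, ← C_mul, mul_one_div_cancel (by positivity), C_1, one_mul]
    simp only [pow_mul]
  rw [term, theta, ← Finset.add_sum_erase _ _ (Finset.mem_range_succ_iff.mpr hk), ← mul_sub,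
    add_sub_cancel_left]
  exact (isSumSq_C (by positivity)).mul (isSumSq_sum_even_pow _ (fun _ ↦ by positivity) _)

lemma isSumSq_theta_sub_prod_pow [Nonempty (Fin n)] (β : Fin n → ℕ) {r : ℕ}
    (hr : ∑ i, β i ≤ r) :
    IsSumSq (C (n.factorial * (∑ i, β i).factorial : ℝ) * theta n r - (∏ i, X i ^ β i) ^ 2) := by
  have prod_le := isSumSq_sum_pow_sub_prod_pow Finset.univ_nonempty
    (fun i ↦ (IsSquare.sq (X i : MvPolynomial (Fin n) ℝ)).isSumSq) β
  have sum_le := (isSumSq_C (σ := Fin n) n.factorial.cast_nonneg).mul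
    (isSumSq_theta_sub_sum_pow (n := n) hr)
  rw [Finset.card_univ, Fintype.card_fin] at prod_le
  convert! prod_le.add sum_le using 1
  simp only [← Finset.prod_pow, ← pow_mul, mul_comm 2, map_mul, map_natCast]
  ring

lemma isSumSq_sq_add_sq_add_mul {σ : Type*} (c : ℝ) (a b : MvPolynomial σ ℝ) :
    IsSumSq (C (|c| / 2) * (a ^ 2 + b ^ 2) + C c * (a * b)) := by
  obtain ⟨d, rfl⟩ : ∃ d, c = 2 * d := ⟨c / 2, by ring⟩
  rw [abs_mul, abs_two, mul_div_cancel_left₀ _ two_ne_zero]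
  rcases le_total 0 d with hd | hd
  · have square : C |d| * (a ^ 2 + b ^ 2) + C (2 * d) * (a * b) = C d * (a + b) ^ 2 := by
      rw [abs_of_nonneg hd, C_mul, map_ofNat]
      ring
    exact square ▸ (isSumSq_C hd).mul (IsSquare.sq _).isSumSq
  · have square : C |d| * (a ^ 2 + b ^ 2) + C (2 * d) * (a * b) = C (-d) * (a - b) ^ 2 := by
      rw [abs_of_nonpos hd, C_mul, map_ofNat, C_neg]
      ring
    exact square ▸ (isSumSq_C (neg_nonneg.mpr hd)).mul (IsSquare.sq _).isSumSq

/-- The cost, per variable, of absorbing the power `x ^ l` into a multiple of `θ_r` in `n`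
variables: `n ^ k * k!`, where `2 * k` is the first even number at least `l`. -/
noncomputable def thetaWeight (n l : ℕ) : ℝ :=
  (n : ℝ) ^ ((l + 1) / 2) * (((l + 1) / 2).factorial : ℝ)

lemma thetaWeight_nonneg (n l : ℕ) : 0 ≤ thetaWeight n l := by
  unfold thetaWeight
  positivity

lemma isSumSq_theta_add_monomial [Nonempty (Fin n)] (c : ℝ) (α : Fin n → ℕ) {r : ℕ}
    (hr : ∑ i, (α i + 1) / 2 ≤ r) :
    IsSumSq (C c * ∏ i, X i ^ α i + C (n.factorial * |c| * ∏ i, thetaWeight n (α i)) *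
      theta n r) := by
  set W : ℝ := ∏ i, thetaWeight n (α i)
  have half_le : ∑ i, α i / 2 ≤ ∑ i, (α i + 1) / 2 := Finset.sum_le_sum fun i _ ↦ by lia
  have factorial_le : ((∑ i, (α i + 1) / 2).factorial : ℝ) ≤ W := by
    simp only [W, thetaWeight]
    exact_mod_cast Fintype.card_fin n ▸ factorial_sum_le_prod_card_pow_mul fun i ↦ (α i + 1) / 2
  have dominate (β : Fin n → ℕ) (hβ : ∑ i, β i ≤ ∑ i, (α i + 1) / 2) :
      IsSumSq (C (n.factorial * W) * theta n r - (∏ i, X i ^ β i) ^ 2) := by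
    have weight_le : n.factorial * ((∑ i, β i).factorial : ℝ) ≤ n.factorial * W := by
      gcongr
      exact (Nat.cast_le.mpr (Nat.factorial_le hβ)).trans factorial_le
    convert! (isSumSq_theta_sub_prod_pow β (hβ.trans hr)).add
      ((isSumSq_C (sub_nonneg.mpr weight_le)).mul (isSumSq_theta r)) using 1
    rw [C_sub]
    ring
  have halves : ∏ i, (X i : MvPolynomial (Fin n) ℝ) ^ α i =
      (∏ i, X i ^ (α i / 2)) * ∏ i, X i ^ ((α i + 1) / 2) := by
    rw [← Finset.prod_mul_distrib]
    exact Finset.prod_congr rfl fun i _ ↦ by rw [← pow_add]; congr 1; lia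
  have two_halves : C (n.factorial * |c| * W) =
      C (|c| / 2) * (C (n.factorial * W) + C (n.factorial * W) : MvPolynomial (Fin n) ℝ) := by
    rw [← C_add, ← C_mul]
    congr 1
    ring
  rw [halves, two_halves]
  convert! (isSumSq_sq_add_sq_add_mul c (∏ i, X i ^ (α i / 2)) (∏ i, X i ^ ((α i + 1) / 2))).add
    ((isSumSq_C (by positivity : 0 ≤ |c| / 2)).mul
      ((dominate (fun i ↦ α i / 2) half_le).add (dominate (fun i ↦ (α i + 1) / 2) le_rfl))) using 1
  ring

/-- `p` becomes a sum of squares after adding `t • θ_r`, for all large `r`. -/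
def IsSOSUpTo (t : ℝ) (p : MvPolynomial (Fin n) ℝ) : Prop :=
  ∀ᶠ r in atTop, IsSumSq (p + C t * theta n r)

namespace IsSOSUpTo

lemma of_isSumSq {p : MvPolynomial (Fin n) ℝ} (hp : IsSumSq p) : IsSOSUpTo 0 p :=
  .of_forall fun r ↦ by simpa using hp

lemma mono {s t : ℝ} {p : MvPolynomial (Fin n) ℝ} (hp : IsSOSUpTo s p) (hst : s ≤ t) :
    IsSOSUpTo t p := by
  filter_upwards [hp] with r hr
  convert! hr.add ((isSumSq_C (sub_nonneg.mpr hst)).mul (isSumSq_theta r)) using 1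
  rw [C_sub]
  ring

lemma add {s t : ℝ} {p q : MvPolynomial (Fin n) ℝ} (hp : IsSOSUpTo s p) (hq : IsSOSUpTo t q) :
    IsSOSUpTo (s + t) (p + q) := by
  filter_upwards [hp, hq] with r hpr hqr
  convert! hpr.add hqr using 1
  rw [C_add]
  ring

lemma sum {ι : Type*} (I : Finset ι) {t : ι → ℝ} {p : ι → MvPolynomial (Fin n) ℝ}
    (hp : ∀ i ∈ I, IsSOSUpTo (t i) (p i)) : IsSOSUpTo (∑ i ∈ I, t i) (∑ i ∈ I, p i) := by
  filter_upwards [(Finset.eventually_all I).mpr hp] with r hr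
  rw [map_sum, Finset.sum_mul, ← Finset.sum_add_distrib]
  exact .sum hr

lemma monomial [Nonempty (Fin n)] (c : ℝ) (α : Fin n → ℕ) :
    IsSOSUpTo (n.factorial * |c| * ∏ i, thetaWeight n (α i)) (C c * ∏ i, X i ^ α i) :=
  eventually_atTop.mpr ⟨∑ i, (α i + 1) / 2, fun _ hr ↦ isSumSq_theta_add_monomial c α hr⟩

end IsSOSUpTo

end Theta

section WeightedNorm

/-- The `ℓ¹` norm of the coefficients of a univariate polynomial, weighted by `thetaWeight n`. -/
noncomputable def weightedNorm (n : ℕ) (p : Polynomial ℝ) : ℝ :=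
  ∑' l, |p.coeff l| * thetaWeight n l

lemma weightedNorm_eq_sum_support (n : ℕ) (p : Polynomial ℝ) :
    weightedNorm n p = ∑ l ∈ p.support, |p.coeff l| * thetaWeight n l :=
  tsum_eq_sum fun l hl ↦ by rw [Polynomial.notMem_support_iff.mp hl, abs_zero, zero_mul]

lemma weightedNorm_nonneg (n : ℕ) (p : Polynomial ℝ) : 0 ≤ weightedNorm n p :=
  tsum_nonneg fun l ↦ mul_nonneg (abs_nonneg _) (thetaWeight_nonneg n l)

variable {n : ℕ} [Nonempty (Fin n)]

lemma IsSOSUpTo.prod_aeval (c : ℝ) (p : Fin n → Polynomial ℝ) :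
    IsSOSUpTo (n.factorial * |c| * ∏ i, weightedNorm n (p i))
      (C c * ∏ i, Polynomial.aeval (X i) (p i)) := by
  have expand_poly : C c * ∏ i, Polynomial.aeval (X i : MvPolynomial (Fin n) ℝ) (p i) =
      ∑ α ∈ Fintype.piFinset fun i ↦ (p i).support,
        C (c * ∏ i, (p i).coeff (α i)) * ∏ i, X i ^ α i := by
    simp only [Polynomial.aeval_def, Polynomial.eval₂_eq_sum, Polynomial.sum_def, algebraMap_eq,
      Finset.prod_univ_sum, Finset.prod_mul_distrib, Finset.mul_sum, C_mul, map_prod, mul_assoc]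
  have expand_norm : n.factorial * |c| * ∏ i, weightedNorm n (p i) =
      ∑ α ∈ Fintype.piFinset fun i ↦ (p i).support,
        n.factorial * |c * ∏ i, (p i).coeff (α i)| * ∏ i, thetaWeight n (α i) := by
    simp only [weightedNorm_eq_sum_support, Finset.prod_univ_sum, Finset.prod_mul_distrib,
      Finset.mul_sum, abs_mul, Finset.abs_prod, mul_assoc]
  rw [expand_poly, expand_norm]
  exact .sum _ fun α _ ↦ .monomial _ α

lemma IsSOSUpTo.prod_aeval_sub_prod_aeval (c : ℝ) (p q : Fin n → Polynomial ℝ) :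
    IsSOSUpTo (n.factorial * |c| *
        (∏ i, (weightedNorm n (q i) + weightedNorm n (p i - q i)) - ∏ i, weightedNorm n (q i)))
      (C c * (∏ i, Polynomial.aeval (X i) (q i) - ∏ i, Polynomial.aeval (X i) (p i))) := by
  let part (i : Fin n) (b : Bool) : Polynomial ℝ := if b then q i else p i - q i
  let mixed : Finset (Fin n → Bool) := Finset.univ.erase fun _ ↦ true
  have expand {A : Type} [CommRing A] (φ : Fin n → Polynomial ℝ → A) :
      ∑ b ∈ mixed, ∏ i, φ i (part i (b i)) =
        ∏ i, (φ i (q i) + φ i (p i - q i)) - ∏ i, φ i (q i) := by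
    rw [Finset.sum_erase_eq_sub (Finset.mem_univ _), ← Fintype.prod_sum fun i b ↦ φ i (part i b)]
    simp only [Fintype.sum_bool, part, if_true, Bool.false_eq_true, if_false]
  have expand_poly :
      C c * (∏ i, Polynomial.aeval (X i) (q i) - ∏ i, Polynomial.aeval (X i) (p i)) =
      ∑ b ∈ mixed,
        C (-c) * ∏ i, Polynomial.aeval (X i : MvPolynomial (Fin n) ℝ) (part i (b i)) := by
    rw [← Finset.mul_sum, expand fun i r ↦ Polynomial.aeval (X i : MvPolynomial (Fin n) ℝ) r]
    simp only [map_sub, add_sub_cancel, C_neg]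
    ring
  rw [expand_poly, ← expand fun _ ↦ weightedNorm n, Finset.mul_sum, ← abs_neg c]
  exact .sum _ fun b _ ↦ .prod_aeval _ _

end WeightedNorm

section UniformDecay

open scoped ContDiff

/-- Smooth functions all of whose derivatives decay like `(1 + |y|) ^ (-m)`, with constants growing
at most geometrically in the order of the derivative. -/
structure HasUniformDecay (m : ℕ) (h : ℝ → ℝ) : Prop where
  contDiff : ContDiff ℝ ∞ h
  bound : ∃ A B : ℝ, 0 ≤ A ∧ 0 ≤ B ∧ ∀ j y, |iteratedDeriv j h y| * (1 + |y|) ^ m ≤ A * B ^ j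

lemma hasDerivAt_iteratedDeriv {h : ℝ → ℝ} (hh : ContDiff ℝ ∞ h) (l : ℕ) (y : ℝ) :
    HasDerivAt (iteratedDeriv l h) (iteratedDeriv (l + 1) h y) y := by
  rw [iteratedDeriv_succ]
  exact (hh.differentiable_iteratedDeriv l (mod_cast ENat.natCast_lt_top l) y).hasDerivAt

lemma abs_iteratedDeriv_mul_le {f g : ℝ → ℝ} (hf : ContDiff ℝ ∞ f) (hg : ContDiff ℝ ∞ g)
    {a b A B A' B' : ℝ} {y : ℝ} (ha : 0 ≤ a) (hb : 0 ≤ b) (hA : 0 ≤ A) (hB : 0 ≤ B)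
    (hfy : ∀ j, |iteratedDeriv j f y| * a ≤ A * B ^ j)
    (hgy : ∀ j, |iteratedDeriv j g y| * b ≤ A' * B' ^ j) (j : ℕ) :
    |iteratedDeriv j (f * g) y| * (a * b) ≤ A * A' * (B + B') ^ j := by
  rw [iteratedDeriv_mul (hf.contDiffAt.of_le (mod_cast le_top))
    (hg.contDiffAt.of_le (mod_cast le_top)), add_pow, Finset.mul_sum]
  calc |∑ i ∈ Finset.range (j + 1), j.choose i * iteratedDeriv i f y * iteratedDeriv (j - i) g y|
        * (a * b)
      ≤ ∑ i ∈ Finset.range (j + 1), |j.choose i * iteratedDeriv i f y * iteratedDeriv (j - i) g y|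
        * (a * b) := by
        rw [← Finset.sum_mul]
        gcongr
        exact Finset.abs_sum_le_sum_abs _ _
    _ ≤ ∑ i ∈ Finset.range (j + 1), A * A' * (B ^ i * B' ^ (j - i) * j.choose i) := by
        refine Finset.sum_le_sum fun i _ ↦ ?_
        calc |j.choose i * iteratedDeriv i f y * iteratedDeriv (j - i) g y| * (a * b)
            = j.choose i * ((|iteratedDeriv i f y| * a) * (|iteratedDeriv (j - i) g y| * b)) := by
              rw [abs_mul, abs_mul, Nat.abs_cast]
              ring
          _ ≤ j.choose i * ((A * B ^ i) * (A' * B' ^ (j - i))) := by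
              exact mul_le_mul_of_nonneg_left (mul_le_mul (hfy i) (hgy _) (by positivity)
                (by positivity)) (Nat.cast_nonneg _)
          _ = A * A' * (B ^ i * B' ^ (j - i) * j.choose i) := by ring

namespace HasUniformDecay

variable {m m' : ℕ} {h h' : ℝ → ℝ}

lemma mul (hh : HasUniformDecay m h) (hh' : HasUniformDecay m' h') :
    HasUniformDecay (m + m') (h * h') := by
  obtain ⟨A, B, hA, hB, bound⟩ := hh.bound
  obtain ⟨A', B', hA', hB', bound'⟩ := hh'.bound
  refine ⟨hh.contDiff.mul hh'.contDiff, A * A', B + B', by positivity, by positivity, fun j y ↦ ?_⟩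
  rw [pow_add]
  exact abs_iteratedDeriv_mul_le hh.contDiff hh'.contDiff (by positivity) (by positivity) hA hB
    (bound · y) (bound' · y) j

lemma one : HasUniformDecay 0 1 := by
  refine ⟨contDiff_const, 1, 0, zero_le_one, le_rfl, fun j y ↦ ?_⟩
  change |iteratedDeriv j (fun _ ↦ 1) y| * _ ≤ _
  rcases j with _ | j <;> simp [iteratedDeriv_const]

lemma pow (hh : HasUniformDecay m h) : ∀ k, HasUniformDecay (k * m) (h ^ k)
  | 0 => by simpa using one
  | k + 1 => by simpa only [add_mul, one_mul, pow_succ] using (hh.pow k).mul hh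

lemma const_mul (hh : HasUniformDecay m h) (c : ℝ) : HasUniformDecay m fun y ↦ c * h y := by
  obtain ⟨A, B, hA, hB, bound⟩ := hh.bound
  refine ⟨contDiff_const.mul hh.contDiff, |c| * A, B, by positivity, hB, fun j y ↦ ?_⟩
  rw [iteratedDeriv_const_mul_field, abs_mul, mul_assoc, mul_assoc]
  exact mul_le_mul_of_nonneg_left (bound j y) (abs_nonneg c)

lemma comp_const_mul (hh : HasUniformDecay m h) {τ : ℝ} (hτ : 1 ≤ τ) :
    HasUniformDecay m fun y ↦ h (τ * y) := by
  obtain ⟨A, B, hA, hB, bound⟩ := hh.bound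
  have smooth : ContDiff ℝ ∞ fun y ↦ h (τ * y) := hh.contDiff.comp (contDiff_const.mul contDiff_id)
  refine ⟨smooth, A, τ * B, hA, by positivity, fun j y ↦ ?_⟩
  have weight_le : (1 + |y|) ^ m ≤ (1 + |τ * y|) ^ m := by
    rw [abs_mul, abs_of_nonneg (zero_le_one.trans hτ)]
    exact pow_le_pow_left₀ (by positivity)
      (by gcongr; exact le_mul_of_one_le_left (abs_nonneg y) hτ) m
  rw [iteratedDeriv_comp_const_mul (hh.contDiff.of_le (mod_cast le_top)), abs_mul, abs_pow,
    abs_of_pos (by positivity), mul_pow, mul_assoc]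
  calc τ ^ j * (|iteratedDeriv j h (τ * y)| * (1 + |y|) ^ m)
      ≤ τ ^ j * (|iteratedDeriv j h (τ * y)| * (1 + |τ * y|) ^ m) := by gcongr
    _ ≤ τ ^ j * (A * B ^ j) := by
        exact mul_le_mul_of_nonneg_left (bound j _) (by positivity)
    _ = A * (τ ^ j * B ^ j) := by ring

end HasUniformDecay

lemma memLp_id_restrict_Icc (k : ENNReal) : MemLp id k (volume.restrict (Set.Icc (-1 : ℝ) 1)) :=
  .of_bound (by fun_prop) 1 <| (ae_restrict_iff' measurableSet_Icc).mpr <| .of_forall fun _ ↦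
    abs_le.mpr

lemma charFun_restrict_Icc (t : ℝ) :
    charFun (volume.restrict (Set.Icc (-1 : ℝ) 1)) t = 2 * Real.sinc t := by
  have rescale := intervalIntegral.smul_integral_comp_mul_left (a := -1) (b := 1)
    (f := fun x : ℝ ↦ Complex.exp (x * Complex.I)) t
  rw [charFun_apply_real, integral_Icc_eq_integral_Ioc,
    ← intervalIntegral.integral_of_le (by norm_num)]
  rcases eq_or_ne t 0 with rfl | ht
  · norm_num
  · rw [mul_neg_one, mul_one, integral_exp_mul_I_eq_sinc, Complex.real_smul] at rescale
    refine mul_left_cancel₀ (Complex.ofReal_ne_zero.mpr ht) ?_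
    rw [mul_left_comm, ← mul_assoc, ← rescale]
    push_cast
    rfl

lemma sinc_eq_re_charFun : Real.sinc = fun t ↦
    1 / 2 * Complex.reCLM (charFun (volume.restrict (Set.Icc (-1 : ℝ) 1)) t) := by
  funext t
  rw [charFun_restrict_Icc, Complex.reCLM_apply]
  norm_cast
  simp

lemma contDiff_sinc {k : ℕ∞} : ContDiff ℝ k Real.sinc := by
  rw [sinc_eq_re_charFun]
  exact contDiff_const.mul (Complex.reCLM.contDiff.comp
    (contDiff_charFun' fun k ↦ memLp_id_restrict_Icc k))

lemma norm_iteratedDeriv_charFun_restrict_Icc_le (j : ℕ) (y : ℝ) :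
    ‖iteratedDeriv j (charFun (volume.restrict (Set.Icc (-1 : ℝ) 1))) y‖ ≤ 2 := by
  rw [iteratedDeriv_charFun (memLp_id_restrict_Icc j), norm_mul, norm_pow, Complex.norm_I, one_pow,
    one_mul]
  have integrand_le (x : ℝ) (hx : x ∈ Set.Icc (-1 : ℝ) 1) :
      ‖(x : ℂ) ^ j * Complex.exp (y * x * Complex.I)‖ ≤ 1 := by
    rw [norm_mul, norm_pow, Complex.norm_real, ← Complex.ofReal_mul, Complex.norm_exp_ofReal_mul_I,
      mul_one]
    exact pow_le_one₀ (norm_nonneg _) (abs_le.mpr hx)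
  refine (norm_setIntegral_le_of_norm_le_const (by simp) integrand_le).trans ?_
  norm_num

lemma abs_iteratedDeriv_sinc_le_one (j : ℕ) (y : ℝ) : |iteratedDeriv j Real.sinc y| ≤ 1 := by
  have smooth : ContDiff ℝ j (charFun (volume.restrict (Set.Icc (-1 : ℝ) 1))) :=
    contDiff_charFun (memLp_id_restrict_Icc j)
  have re_le := Complex.reCLM.norm_iteratedFDeriv_comp_left smooth.contDiffAt le_rfl (x := y)
  rw [norm_iteratedFDeriv_eq_norm_iteratedDeriv, norm_iteratedFDeriv_eq_norm_iteratedDeriv,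
    Complex.reCLM_norm, one_mul] at re_le
  rw [sinc_eq_re_charFun, iteratedDeriv_const_mul_field, abs_mul, abs_of_pos one_half_pos]
  rw [← le_div_iff₀' one_half_pos, ← Real.norm_eq_abs]
  exact (re_le.trans (norm_iteratedDeriv_charFun_restrict_Icc_le j y)).trans_eq (by norm_num)

lemma mul_sinc (y : ℝ) : y * Real.sinc y = Real.sin y := by
  rcases eq_or_ne y 0 with rfl | hy
  · simp
  · rw [Real.sinc_of_ne_zero hy, mul_div_cancel₀ _ hy]

lemma mul_iteratedDeriv_sinc (j : ℕ) (y : ℝ) :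
    y * iteratedDeriv j Real.sinc y + j * iteratedDeriv (j - 1) Real.sinc y =
      iteratedDeriv j Real.sin y := by
  induction j generalizing y with
  | zero => simpa using mul_sinc y
  | succ j ih =>
    have product := ((hasDerivAt_id y).mul (hasDerivAt_iteratedDeriv contDiff_sinc j y)).add
      ((hasDerivAt_iteratedDeriv contDiff_sinc (j - 1) y).const_mul (j : ℝ))
    have sin_eq : id * iteratedDeriv j Real.sinc + (fun y ↦ j * iteratedDeriv (j - 1) Real.sinc y) =
        iteratedDeriv j Real.sin := funext ih
    rw [sin_eq] at product
    rw [iteratedDeriv_succ (f := Real.sin), product.deriv]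
    rcases j with _ | j <;> push_cast [id, Nat.add_sub_cancel] <;> ring

lemma hasUniformDecay_sinc : HasUniformDecay 1 Real.sinc := by
  refine ⟨contDiff_sinc, 2, 2, zero_le_two, zero_le_two, fun j y ↦ ?_⟩
  have j_lt : (j : ℝ) + 1 ≤ 2 ^ j := mod_cast Nat.lt_two_pow_self
  have mul_le : |y * iteratedDeriv j Real.sinc y| ≤ 1 + j := by
    rw [eq_sub_of_add_eq (mul_iteratedDeriv_sinc j y)]
    refine (abs_sub _ _).trans (add_le_add (Real.abs_iteratedDeriv_sin_le_one j y) ?_)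
    rw [abs_mul, Nat.abs_cast]
    exact mul_le_of_le_one_right j.cast_nonneg (abs_iteratedDeriv_sinc_le_one _ _)
  calc |iteratedDeriv j Real.sinc y| * (1 + |y|) ^ 1
      = |iteratedDeriv j Real.sinc y| + |y * iteratedDeriv j Real.sinc y| := by
        rw [abs_mul]
        ring
    _ ≤ 1 + (1 + j) := add_le_add (abs_iteratedDeriv_sinc_le_one j y) mul_le
    _ ≤ 2 * 2 ^ j := by linarith

end UniformDecay

section Moments

open scoped ContDiff
open Finset.HasAntidiagonal (antidiagonal)

lemma integrable_one_div_one_add_abs_sq : Integrable fun y : ℝ ↦ 1 / (1 + |y|) ^ 2 := by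
  have := integrable_one_add_norm (E := ℝ) (μ := volume) (r := 2) (by simp)
  refine this.congr (.of_forall fun y ↦ ?_)
  dsimp only
  rw [Real.rpow_neg (by positivity), Real.norm_eq_abs, one_div, Real.rpow_ofNat]

lemma abs_pow_mul_le_of_decay {x y c : ℝ} {k m : ℕ} (hk : k + 2 ≤ m)
    (hx : |x| * (1 + |y|) ^ m ≤ c) : |y ^ k * x| ≤ c * (1 / (1 + |y|) ^ 2) := by
  rw [mul_one_div, le_div_iff₀ (by positivity), abs_mul, abs_pow]
  calc |y| ^ k * |x| * (1 + |y|) ^ 2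
      ≤ (1 + |y|) ^ k * |x| * (1 + |y|) ^ 2 := by
        gcongr
        exact le_add_of_nonneg_left zero_le_one
    _ = |x| * (1 + |y|) ^ (k + 2) := by ring
    _ ≤ |x| * (1 + |y|) ^ m := by
        gcongr
        exact le_add_of_nonneg_right (abs_nonneg y)
    _ ≤ c := hx

lemma abs_integral_pow_mul_le_of_decay {f : ℝ → ℝ} {c : ℝ} {k m : ℕ} (hk : k + 2 ≤ m)
    (hf : ∀ y, |f y| * (1 + |y|) ^ m ≤ c) :
    |∫ y, y ^ k * f y| ≤ c * ∫ y : ℝ, 1 / (1 + |y|) ^ 2 := by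
  rw [← integral_const_mul]
  exact norm_integral_le_of_norm_le (integrable_one_div_one_add_abs_sq.const_mul c)
    (.of_forall fun y ↦ (Real.norm_eq_abs _).trans_le (abs_pow_mul_le_of_decay hk (hf y)))

namespace HasUniformDecay

variable {m : ℕ} {h : ℝ → ℝ}

protected lemma iteratedDeriv (hh : HasUniformDecay m h) (i : ℕ) :
    HasUniformDecay m (iteratedDeriv i h) := by
  obtain ⟨A, B, hA, hB, bound⟩ := hh.bound
  refine ⟨?_, A * B ^ i, B, by positivity, hB, fun j y ↦ ?_⟩
  · rw [iteratedDeriv_eq_iterate]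
    exact hh.contDiff.iterate_deriv i
  · have comp : iteratedDeriv j (iteratedDeriv i h) = iteratedDeriv (i + j) h := by
      simp only [iteratedDeriv_eq_iterate, ← Function.iterate_add_apply, add_comm]
    rw [comp, mul_assoc, ← pow_add]
    exact bound (i + j) y

lemma integrable_pow_mul (hh : HasUniformDecay m h) {k : ℕ} (hk : k + 2 ≤ m) :
    Integrable fun y ↦ y ^ k * h y := by
  obtain ⟨A, B, -, -, bound⟩ := hh.bound
  refine (integrable_one_div_one_add_abs_sq.const_mul A).mono'
    (by have := hh.contDiff.continuous; fun_prop) (.of_forall fun y ↦ ?_)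
  exact abs_pow_mul_le_of_decay hk (by simpa using bound 0 y)

lemma integral_pow_mul_iteratedDeriv (hh : HasUniformDecay m h) {k : ℕ} (hk : k + 2 ≤ m) (l : ℕ) :
    ∫ y, y ^ k * iteratedDeriv l h y =
      (-1) ^ l * k.descFactorial l * ∫ y, y ^ (k - l) * h y := by
  induction l generalizing k with
  | zero => simp
  | succ l ih =>
    have by_parts : ∫ y, y ^ k * iteratedDeriv (l + 1) h y =
        -∫ y, k * y ^ (k - 1) * iteratedDeriv l h y := by
      refine integral_mul_deriv_eq_deriv_mul_of_integrable (fun y _ ↦ hasDerivAt_pow k y)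
        (fun y _ ↦ hasDerivAt_iteratedDeriv hh.contDiff l y)
        ((hh.iteratedDeriv _).integrable_pow_mul hk) ?_ ((hh.iteratedDeriv _).integrable_pow_mul hk)
      simpa only [Pi.mul_def, mul_assoc] using
        ((hh.iteratedDeriv l).integrable_pow_mul (k := k - 1) (by lia)).const_mul (k : ℝ)
    rw [by_parts]
    simp only [mul_assoc]
    rw [integral_const_mul, ih (by lia), Nat.sub_sub, Nat.add_comm 1 l]
    rcases k with _ | k
    · simp
    · rw [Nat.succ_descFactorial_succ, Nat.add_sub_cancel]
      push_cast
      ring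

end HasUniformDecay

/-- The `j`-th Taylor coefficient at `0` of `x ↦ h (y - x)`. -/
noncomputable def shiftCoeff (h : ℝ → ℝ) (j : ℕ) (y : ℝ) : ℝ :=
  (-1) ^ j / j.factorial * iteratedDeriv j h y

/-- The polynomial obtained from `∫ y ^ k * h (y - x) ^ 2 ∂y` by truncating both Taylor expansions
of `h (y - x)` in `x` after degree `r`. It approximates `x ^ k` when `h ^ 2` is close to a Dirac
mass. -/
noncomputable def smoothedPow (h : ℝ → ℝ) (r k : ℕ) : Polynomial ℝ :=
  ∑ i : Fin (r + 1), ∑ j : Fin (r + 1),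
    Polynomial.C (∫ y, y ^ k * (shiftCoeff h i y * shiftCoeff h j y)) * Polynomial.X ^ (i + j : ℕ)

lemma abs_shiftCoeff (h : ℝ → ℝ) (j : ℕ) (y : ℝ) :
    |shiftCoeff h j y| = |iteratedDeriv j h y| / j.factorial := by
  rw [shiftCoeff, abs_mul, abs_div, abs_pow, abs_neg, abs_one, one_pow, Nat.abs_cast,
    one_div_mul_eq_div]

lemma smoothedPow_coeff (h : ℝ → ℝ) (r k l : ℕ) : (smoothedPow h r k).coeff l =
    ∑ p ∈ antidiagonal l with p.1 ≤ r ∧ p.2 ≤ r,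
      ∫ y, y ^ k * (shiftCoeff h p.1 y * shiftCoeff h p.2 y) := by
  have degrees : (antidiagonal l).filter (fun p ↦ p.1 ≤ r ∧ p.2 ≤ r) =
      (Finset.range (r + 1) ×ˢ Finset.range (r + 1)).filter fun p ↦ l = p.1 + p.2 := by
    ext p
    simp only [Finset.mem_filter, Finset.HasAntidiagonal.mem_antidiagonal, Finset.mem_product,
      Finset.mem_range]
    lia
  rw [degrees, Finset.sum_filter, Finset.sum_product, smoothedPow]
  simp only [Polynomial.finsetSum_coeff, Polynomial.coeff_C_mul_X_pow]
  rw [Finset.sum_range]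
  simp only [Finset.sum_range]

lemma sum_shiftCoeff_mul_shiftCoeff {h : ℝ → ℝ} (hh : ContDiff ℝ ∞ h) (l : ℕ) (y : ℝ) :
    ∑ p ∈ antidiagonal l, shiftCoeff h p.1 y * shiftCoeff h p.2 y =
      (-1) ^ l / l.factorial * iteratedDeriv l (h * h) y := by
  have smooth : ContDiffAt ℝ l h y := hh.contDiffAt.of_le (mod_cast le_top)
  rw [iteratedDeriv_mul smooth smooth, Finset.Nat.sum_antidiagonal_eq_sum_range_succ_mk,
    Finset.mul_sum]
  refine Finset.sum_congr rfl fun i hi ↦ ?_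
  have hil : i ≤ l := Finset.mem_range_succ_iff.mp hi
  have sign : (-1 : ℝ) ^ l = (-1) ^ i * (-1) ^ (l - i) := by rw [← pow_add, Nat.add_sub_cancel' hil]
  simp only [shiftCoeff, sign, Nat.cast_choose ℝ hil]
  field_simp

end Moments

section SmoothedPow

open scoped ContDiff
open Finset.HasAntidiagonal (antidiagonal)

namespace HasUniformDecay

variable {m : ℕ} {h : ℝ → ℝ}

protected lemma shiftCoeff (hh : HasUniformDecay m h) (j : ℕ) :
    HasUniformDecay m (shiftCoeff h j) :=
  (hh.iteratedDeriv j).const_mul _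

lemma integrable_pow_mul_shiftCoeff_mul (hh : HasUniformDecay m h) {k : ℕ} (hk : k + 2 ≤ m + m)
    (i j : ℕ) : Integrable fun y ↦ y ^ k * (shiftCoeff h i y * shiftCoeff h j y) :=
  ((hh.shiftCoeff i).mul (hh.shiftCoeff j)).integrable_pow_mul hk

lemma smoothedPow_coeff_of_le (hh : HasUniformDecay m h) {k l r : ℕ} (hk : k + 2 ≤ m + m)
    (hl : l ≤ r) : (smoothedPow h r k).coeff l = k.choose l * ∫ y, y ^ (k - l) * h y ^ 2 := by
  have no_truncation : ∀ p ∈ antidiagonal l, p.1 ≤ r ∧ p.2 ≤ r := fun p hp ↦ by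
    have := Finset.HasAntidiagonal.mem_antidiagonal.mp hp
    lia
  have moment := (hh.mul hh).integral_pow_mul_iteratedDeriv hk l
  rw [smoothedPow_coeff, Finset.filter_true_of_mem no_truncation,
    ← integral_finsetSum _ fun p _ ↦ hh.integrable_pow_mul_shiftCoeff_mul hk p.1 p.2]
  simp only [← Finset.mul_sum, sum_shiftCoeff_mul_shiftCoeff hh.contDiff]
  simp only [mul_left_comm (_ ^ k)]
  rw [integral_const_mul, moment, Nat.descFactorial_eq_factorial_mul_choose]
  simp only [Pi.mul_apply, ← sq]
  push_cast
  have sign : ((-1 : ℝ) ^ l) * (-1) ^ l = 1 := by rw [← mul_pow]; norm_num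
  field_simp
  linear_combination (k.choose l * ∫ y, y ^ (k - l) * h y ^ 2) * sign

lemma exists_abs_smoothedPow_coeff_le (hh : HasUniformDecay m h) {k : ℕ} (hk : k + 2 ≤ m + m) :
    ∃ M B : ℝ, 0 ≤ B ∧ ∀ r l, |(smoothedPow h r k).coeff l| ≤ M * (B ^ l / l.factorial) := by
  obtain ⟨A, B, hA, hB, bound⟩ := hh.bound
  set I := ∫ y : ℝ, 1 / (1 + |y|) ^ 2
  have : 0 ≤ I := integral_nonneg fun y ↦ by positivity
  refine ⟨A * A * I, B + B, by positivity, fun r l ↦ ?_⟩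
  have coeff_le (j : ℕ) (y : ℝ) :
      |shiftCoeff h j y| * (1 + |y|) ^ m ≤ A * B ^ j / j.factorial := by
    rw [abs_shiftCoeff, div_mul_eq_mul_div]
    exact div_le_div_of_nonneg_right (bound j y) (Nat.cast_nonneg _)
  have integral_le (p : ℕ × ℕ) (hp : p ∈ antidiagonal l) :
      |∫ y, y ^ k * (shiftCoeff h p.1 y * shiftCoeff h p.2 y)| ≤
        A * A * I / l.factorial * (l.choose p.1 • (B ^ p.1 * B ^ p.2)) := by
    refine (abs_integral_pow_mul_le_of_decay hk
      (c := A * B ^ p.1 / p.1.factorial * (A * B ^ p.2 / p.2.factorial)) fun y ↦ ?_).trans_eq ?_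
    · rw [abs_mul, pow_add, mul_mul_mul_comm]
      exact mul_le_mul (coeff_le _ y) (coeff_le _ y) (by positivity) (by positivity)
    · rw [← Finset.HasAntidiagonal.mem_antidiagonal.mp hp, nsmul_eq_mul, Nat.cast_add_choose]
      change _ * I = _
      field_simp
  calc |(smoothedPow h r k).coeff l|
      ≤ ∑ p ∈ antidiagonal l with p.1 ≤ r ∧ p.2 ≤ r,
          |∫ y, y ^ k * (shiftCoeff h p.1 y * shiftCoeff h p.2 y)| := by
        rw [smoothedPow_coeff]
        exact Finset.abs_sum_le_sum_abs _ _
    _ ≤ ∑ p ∈ antidiagonal l,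
          |∫ y, y ^ k * (shiftCoeff h p.1 y * shiftCoeff h p.2 y)| :=
        Finset.sum_le_sum_of_subset_of_nonneg (Finset.filter_subset _ _) fun _ _ _ ↦ abs_nonneg _
    _ ≤ ∑ p ∈ antidiagonal l, A * A * I / l.factorial * (l.choose p.1 • (B ^ p.1 * B ^ p.2)) :=
        Finset.sum_le_sum integral_le
    _ = A * A * I * ((B + B) ^ l / l.factorial) := by
        rw [← Finset.mul_sum, ← Commute.add_pow' (Commute.all B B)]
        ring

end HasUniformDecay

lemma thetaWeight_div_factorial_le (n l : ℕ) :
    thetaWeight n l / l.factorial ≤ (n : ℝ) ^ ((l + 1) / 2) / (l / 2).factorial := by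
  have factorial_le : ((l / 2).factorial * ((l + 1) / 2).factorial : ℝ) ≤ l.factorial := by
    have := Nat.le_of_dvd (Nat.factorial_pos _)
      (Nat.factorial_mul_factorial_dvd_factorial_add (l / 2) ((l + 1) / 2))
    rw [show l / 2 + (l + 1) / 2 = l by lia] at this
    exact_mod_cast this
  rw [thetaWeight, div_le_div_iff₀ (by positivity) (by positivity)]
  calc (n : ℝ) ^ ((l + 1) / 2) * ((l + 1) / 2).factorial * (l / 2).factorial
      = (n : ℝ) ^ ((l + 1) / 2) * ((l / 2).factorial * ((l + 1) / 2).factorial) := by ring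
    _ ≤ (n : ℝ) ^ ((l + 1) / 2) * l.factorial := by gcongr

lemma summable_pow_div_factorial_mul_thetaWeight (n : ℕ) {B : ℝ} (hB : 0 ≤ B) :
    Summable fun l : ℕ ↦ B ^ l / l.factorial * thetaWeight n l := by
  have dominating : Summable fun l : ℕ ↦ B ^ l * ((n : ℝ) ^ ((l + 1) / 2) / (l / 2).factorial) := by
    have exponential := Real.summable_pow_div_factorial (B ^ 2 * n)
    refine Summable.even_add_odd (exponential.congr fun k ↦ ?_)
      ((exponential.mul_left (B * n)).congr fun k ↦ ?_)
    · rw [show (2 * k + 1) / 2 = k by lia, Nat.mul_div_cancel_left k two_pos]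
      ring
    · rw [show (2 * k + 1 + 1) / 2 = k + 1 by lia, show (2 * k + 1) / 2 = k by lia]
      ring
  refine dominating.of_nonneg_of_le (fun l ↦ ?_) fun l ↦ ?_
  · have := thetaWeight_nonneg n l
    positivity
  · rw [div_mul_eq_mul_div, mul_div_assoc]
    exact mul_le_mul_of_nonneg_left (thetaWeight_div_factorial_le n l) (by positivity)

lemma tsum_abs_choose_mul_sub_coeff_X_pow (a w : ℕ → ℝ) (ha : a 0 = 1) (k : ℕ) :
    ∑' l, |k.choose l * a (k - l) - (Polynomial.X ^ k : Polynomial ℝ).coeff l| * w l =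
      ∑ l ∈ Finset.range k, k.choose l * |a (k - l)| * w l := by
  rw [tsum_eq_sum (s := Finset.range k) fun l hl ↦ ?_]
  · refine Finset.sum_congr rfl fun l hl ↦ ?_
    rw [Polynomial.coeff_X_pow, if_neg (Finset.mem_range.mp hl).ne, sub_zero, abs_mul,
      Nat.abs_cast]
  · rcases (not_lt.mp (Finset.mem_range.not.mp hl)).eq_or_lt with rfl | hkl
    · simp [ha]
    · simp [Nat.choose_eq_zero_of_lt hkl, Polynomial.coeff_X_pow, hkl.ne']

lemma HasUniformDecay.tendsto_weightedNorm_smoothedPow_sub {m k : ℕ} {h : ℝ → ℝ}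
    (hh : HasUniformDecay m h) (hk : k + 2 ≤ m + m) (hmass : ∫ y, h y ^ 2 = 1) (n : ℕ) :
    Tendsto (fun r ↦ weightedNorm n (smoothedPow h r k - Polynomial.X ^ k)) atTop
      (𝓝 (∑ l ∈ Finset.range k,
        k.choose l * |∫ y, y ^ (k - l) * h y ^ 2| * thetaWeight n l)) := by
  obtain ⟨M, B, hB, coeff_le⟩ := hh.exists_abs_smoothedPow_coeff_le hk
  set bound : ℕ → ℝ := fun l ↦ M * (B ^ l / l.factorial * thetaWeight n l) +
    |(Polynomial.X ^ k : Polynomial ℝ).coeff l| * thetaWeight n l with bound_def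
  have bound_summable : Summable bound := by
    refine ((summable_pow_div_factorial_mul_thetaWeight n hB).mul_left M).add
      (summable_of_ne_finset_zero (s := {k}) fun l hl ↦ ?_)
    rw [Polynomial.coeff_X_pow, if_neg (by simpa using hl), abs_zero, zero_mul]
  have eventually_eq (l : ℕ) : ∀ᶠ r in atTop,
      |k.choose l * (∫ y, y ^ (k - l) * h y ^ 2) - (Polynomial.X ^ k : Polynomial ℝ).coeff l| *
        thetaWeight n l = |(smoothedPow h r k - Polynomial.X ^ k).coeff l| * thetaWeight n l := by
    filter_upwards [eventually_ge_atTop l] with r hr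
    rw [Polynomial.coeff_sub, hh.smoothedPow_coeff_of_le hk hr]
  have dominated (r l : ℕ) :
      ‖|(smoothedPow h r k - Polynomial.X ^ k).coeff l| * thetaWeight n l‖ ≤ bound l := by
    rw [Real.norm_of_nonneg (mul_nonneg (abs_nonneg _) (thetaWeight_nonneg n l)),
      Polynomial.coeff_sub]
    simp only [bound_def, ← mul_assoc, ← add_mul]
    exact mul_le_mul_of_nonneg_right ((abs_sub _ _).trans (by gcongr; exact coeff_le r l))
      (thetaWeight_nonneg n l)
  rw [← tsum_abs_choose_mul_sub_coeff_X_pow (fun q ↦ ∫ y, y ^ q * h y ^ 2) (thetaWeight n)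
    (by simpa using hmass) k]
  exact tendsto_tsum_of_dominated_convergence bound_summable
    (fun l ↦ tendsto_const_nhds.congr' (eventually_eq l)) (.of_forall dominated)

end SmoothedPow

section Kernel

lemma exists_hasUniformDecay_integral_sq_eq_one {m : ℕ} (hm : 1 ≤ m) :
    ∃ h, HasUniformDecay m h ∧ ∫ y, h y ^ 2 = 1 := by
  have decay : HasUniformDecay m (Real.sinc ^ m) := by
    simpa only [mul_one] using hasUniformDecay_sinc.pow m
  have integrable : Integrable fun y ↦ (Real.sinc ^ m) y ^ 2 := by
    simpa only [pow_zero, one_mul, Pi.mul_apply, ← sq] using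
      (decay.mul decay).integrable_pow_mul (k := 0) (by lia)
  have positive : 0 < ∫ y, (Real.sinc ^ m) y ^ 2 :=
    integral_pos_of_integrable_nonneg_nonzero (x := 0)
      (by have := decay.contDiff.continuous; fun_prop) integrable (fun y ↦ sq_nonneg _) (by simp)
  refine ⟨_, decay.const_mul (√(∫ y, (Real.sinc ^ m) y ^ 2))⁻¹, ?_⟩
  simp only [mul_pow, inv_pow, Real.sq_sqrt positive.le]
  rw [integral_const_mul, inv_mul_cancel₀ positive.ne']

lemma integral_pow_mul_sq_rescale (h : ℝ → ℝ) {τ : ℝ} (hτ : 0 < τ) (q : ℕ) :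
    ∫ y, y ^ q * (√τ * h (τ * y)) ^ 2 = τ⁻¹ ^ q * ∫ y, y ^ q * h y ^ 2 := by
  have substitution := Measure.integral_comp_mul_left (fun y ↦ y ^ q * h y ^ 2) τ
  rw [abs_of_pos (inv_pos.mpr hτ), smul_eq_mul, inv_mul_eq_div, eq_div_iff hτ.ne'] at substitution
  rw [← substitution, ← integral_mul_const, ← integral_const_mul]
  refine integral_congr_ae (.of_forall fun y ↦ ?_)
  simp only [mul_pow, Real.sq_sqrt hτ.le, inv_pow]
  field_simp

lemma exists_weightedNorm_smoothedPow_sub_lt (d n : ℕ) {η : ℝ} (hη : 0 < η) :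
    ∃ h, HasUniformDecay (d + 1) h ∧
      ∀ k ≤ d, ∀ᶠ r in atTop, weightedNorm n (smoothedPow h r k - Polynomial.X ^ k) < η := by
  obtain ⟨h, hh, hmass⟩ := exists_hasUniformDecay_integral_sq_eq_one (Nat.le_add_left 1 d)
  have moments_tendsto (k : ℕ) : Tendsto (fun τ : ℝ ↦ ∑ l ∈ Finset.range k,
      k.choose l * |τ⁻¹ ^ (k - l) * ∫ y, y ^ (k - l) * h y ^ 2| * thetaWeight n l)
      atTop (𝓝 0) := by
    rw [← Finset.sum_const_zero (s := Finset.range k)]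
    refine tendsto_finsetSum _ fun l hl ↦ ?_
    have vanishing : Tendsto (fun τ : ℝ ↦ τ⁻¹ ^ (k - l)) atTop (𝓝 0) := by
      simpa [(Nat.sub_pos_of_lt (Finset.mem_range.mp hl)).ne'] using
        (tendsto_inv_atTop_zero (𝕜 := ℝ)).pow (k - l)
    simpa using (((vanishing.mul_const _).abs).const_mul _).mul_const (thetaWeight n l)
  obtain ⟨τ, hτ, moments_lt⟩ := ((eventually_ge_atTop 1).and
    ((Finset.range (d + 1)).eventually_all.mpr
      fun k _ ↦ (moments_tendsto k).eventually_lt_const hη)).exists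
  have hτ0 : 0 < τ := one_pos.trans_le hτ
  have rescaled := (hh.comp_const_mul hτ).const_mul √τ
  have rescaled_mass : ∫ y, (√τ * h (τ * y)) ^ 2 = 1 := by
    simpa [hmass] using integral_pow_mul_sq_rescale h hτ0 0
  refine ⟨_, rescaled, fun k hk ↦ (rescaled.tendsto_weightedNorm_smoothedPow_sub (by lia)
    rescaled_mass n).eventually_lt_const ?_⟩
  simp only [integral_pow_mul_sq_rescale h hτ0]
  exact moments_lt k (Finset.mem_range_succ_iff.mpr hk)

end Kernel

section Gram

lemma isSumSq_sum_sum_smul_of_posSemidef {ι A : Type*} [Fintype ι] [CommRing A] [Algebra ℝ A]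
    {M : Matrix ι ι ℝ} (hM : M.PosSemidef) (z : ι → A) :
    IsSumSq (∑ a, ∑ b, M a b • (z a * z b)) := by
  obtain ⟨m, v, rfl⟩ := Matrix.posSemidef_iff_eq_sum_vecMulVec.mp hM
  have squares : ∑ a, ∑ b, (∑ i, Matrix.vecMulVec (v i) (star (v i))) a b • (z a * z b) =
      ∑ i, (∑ a, v i a • z a) * ∑ b, v i b • z b := by
    simp only [Matrix.sum_apply, Matrix.vecMulVec_apply, star_trivial,
      Finset.sum_smul, Finset.sum_mul_sum, smul_mul_smul_comm]
    rw [Finset.sum_comm_cycle]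
  rw [squares]
  exact IsSumSq.sum fun i _ ↦ .mul_self _

lemma posSemidef_integral_mul_mul {ι Ω : Type*} [Finite ι] [MeasurableSpace Ω] {μ : Measure Ω}
    {w : Ω → ℝ} {u : ι → Ω → ℝ} (hw : ∀ y, 0 ≤ w y)
    (hint : ∀ a b, Integrable (fun y ↦ w y * (u a y * u b y)) μ) :
    (Matrix.of fun a b ↦ ∫ y, w y * (u a y * u b y) ∂μ).PosSemidef := by
  cases nonempty_fintype ι
  refine .of_dotProduct_mulVec_nonneg ?_ fun v ↦ ?_
  · ext a b
    simp only [Matrix.conjTranspose_apply, Matrix.of_apply, star_trivial, mul_comm (u a _)]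
  · have quadratic_form :
        star v ⬝ᵥ (Matrix.of fun a b ↦ ∫ y, w y * (u a y * u b y) ∂μ).mulVec v =
          ∫ y, w y * (∑ a, v a * u a y) ^ 2 ∂μ := by
      have expand (y : Ω) : w y * (∑ a, v a * u a y) ^ 2 =
          ∑ a, ∑ b, v a * (v b * (w y * (u a y * u b y))) := by
        rw [sq, Finset.sum_mul_sum, Finset.mul_sum]
        simp only [Finset.mul_sum]
        exact Finset.sum_congr rfl fun a _ ↦ Finset.sum_congr rfl fun b _ ↦ by ring
      simp only [expand, dotProduct, Matrix.mulVec, Matrix.of_apply, Pi.star_apply, star_trivial]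
      rw [integral_finsetSum _ fun a _ ↦ integrable_finsetSum _ fun b _ ↦
        ((hint a b).const_mul _).const_mul _]
      refine Finset.sum_congr rfl fun a _ ↦ ?_
      rw [integral_finsetSum _ fun b _ ↦ ((hint a b).const_mul _).const_mul _, Finset.mul_sum]
      refine Finset.sum_congr rfl fun b _ ↦ ?_
      rw [integral_const_mul, integral_const_mul, mul_comm (v b)]
    rw [quadratic_form]
    exact integral_nonneg fun y ↦ mul_nonneg (hw y) (sq_nonneg _)

/-- The Taylor coefficient of `x ↦ ∏ i, h (y i - x i)` at `0` with multi-index `α`. -/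
noncomputable def multiShiftCoeff {n r : ℕ} (h : ℝ → ℝ) (α : Fin n → Fin r) (y : Fin n → ℝ) : ℝ :=
  ∏ i, shiftCoeff h (α i) (y i)

lemma prod_pow_mul_multiShiftCoeff_mul {n r : ℕ} (h : ℝ → ℝ) (γ : Fin n →₀ ℕ) (α β : Fin n → Fin r)
    (y : Fin n → ℝ) :
    (∏ i, y i ^ γ i) * (multiShiftCoeff h α y * multiShiftCoeff h β y) =
      ∏ i, y i ^ γ i * (shiftCoeff h (α i) (y i) * shiftCoeff h (β i) (y i)) := by
  simp only [multiShiftCoeff, Finset.prod_mul_distrib]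

lemma integral_prod_pow_mul_multiShiftCoeff {n r : ℕ} (h : ℝ → ℝ) (γ : Fin n →₀ ℕ)
    (α β : Fin n → Fin r) :
    ∫ y : Fin n → ℝ, (∏ i, y i ^ γ i) * (multiShiftCoeff h α y * multiShiftCoeff h β y) =
      ∏ i, ∫ y, y ^ γ i * (shiftCoeff h (α i) y * shiftCoeff h (β i) y) := by
  simp only [prod_pow_mul_multiShiftCoeff_mul]
  exact integral_fintype_prod_volume_eq_prod
    fun i y ↦ y ^ γ i * (shiftCoeff h (α i) y * shiftCoeff h (β i) y)

lemma HasUniformDecay.integrable_prod_pow_mul_multiShiftCoeff {m n r : ℕ} {h : ℝ → ℝ}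
    (hh : HasUniformDecay m h) {γ : Fin n →₀ ℕ} (hγ : ∀ i, γ i + 2 ≤ m + m)
    (α β : Fin n → Fin r) : Integrable fun y : Fin n → ℝ ↦
      (∏ i, y i ^ γ i) * (multiShiftCoeff h α y * multiShiftCoeff h β y) := by
  simp only [prod_pow_mul_multiShiftCoeff_mul]
  exact Integrable.fintype_prod (f := fun i y ↦
    y ^ γ i * (shiftCoeff h (α i) y * shiftCoeff h (β i) y))
    fun i ↦ hh.integrable_pow_mul_shiftCoeff_mul (hγ i) _ _

lemma prod_aeval_smoothedPow {n : ℕ} (h : ℝ → ℝ) (r : ℕ) (γ : Fin n →₀ ℕ) :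
    ∏ i, Polynomial.aeval (X i : MvPolynomial (Fin n) ℝ) (smoothedPow h r (γ i)) =
      ∑ α : Fin n → Fin (r + 1), ∑ β : Fin n → Fin (r + 1),
        (∫ y : Fin n → ℝ, (∏ i, y i ^ γ i) * (multiShiftCoeff h α y * multiShiftCoeff h β y)) •
          ((∏ i, X i ^ (α i : ℕ)) * ∏ i, X i ^ (β i : ℕ) : MvPolynomial (Fin n) ℝ) := by
  have factor (i : Fin n) :
      Polynomial.aeval (X i : MvPolynomial (Fin n) ℝ) (smoothedPow h r (γ i)) =
      ∑ p : Fin (r + 1) × Fin (r + 1), (∫ y, y ^ γ i * (shiftCoeff h p.1 y * shiftCoeff h p.2 y)) •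
        (X i ^ (p.1 : ℕ) * X i ^ (p.2 : ℕ) : MvPolynomial (Fin n) ℝ) := by
    simp only [smoothedPow, Fintype.sum_prod_type, map_sum, map_mul, map_pow, Polynomial.aeval_C,
      Polynomial.aeval_X, pow_add, Algebra.smul_def]
  simp only [factor, integral_prod_pow_mul_multiShiftCoeff]
  rw [Fintype.prod_sum, ← Fintype.sum_prod_type',
    ← Equiv.sum_comp (Equiv.arrowProdEquivProdArrow (Fin n) (fun _ ↦ Fin (r + 1))
      fun _ ↦ Fin (r + 1))]
  refine Finset.sum_congr rfl fun p _ ↦ ?_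
  simp only [Equiv.arrowProdEquivProdArrow, Equiv.coe_fn_mk, Algebra.smul_def, map_prod,
    Finset.prod_mul_distrib]

lemma HasUniformDecay.isSumSq_sum_coeff_mul_prod_smoothedPow {m n : ℕ} {h : ℝ → ℝ}
    (hh : HasUniformDecay m h) {F : MvPolynomial (Fin n) ℝ} (hF : ∀ x, 0 ≤ eval x F)
    (hdeg : ∀ γ ∈ F.support, ∀ i, γ i + 2 ≤ m + m) (r : ℕ) :
    IsSumSq (∑ γ ∈ F.support, C (coeff γ F) * ∏ i, Polynomial.aeval (X i : MvPolynomial (Fin n) ℝ)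
      (smoothedPow h r (γ i))) := by
  have eval_mul (α β : Fin n → Fin (r + 1)) (y : Fin n → ℝ) :
      eval y F * (multiShiftCoeff h α y * multiShiftCoeff h β y) = ∑ γ ∈ F.support, coeff γ F *
        ((∏ i, y i ^ γ i) * (multiShiftCoeff h α y * multiShiftCoeff h β y)) := by
    simp only [eval_eq', Finset.sum_mul, mul_assoc]
  have integrable (γ) (hγ : γ ∈ F.support) (α β : Fin n → Fin (r + 1)) :=
    (hh.integrable_prod_pow_mul_multiShiftCoeff (hdeg γ hγ) α β).const_mul (coeff γ F)
  have gram := posSemidef_integral_mul_mul (ι := Fin n → Fin (r + 1)) (u := multiShiftCoeff h) hF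
    fun α β ↦ by
      simp only [eval_mul]
      exact integrable_finsetSum _ fun γ hγ ↦ integrable γ hγ α β
  have gram_sum : ∑ γ ∈ F.support,
      C (coeff γ F) * ∏ i, Polynomial.aeval (X i) (smoothedPow h r (γ i)) =
      ∑ α : Fin n → Fin (r + 1), ∑ β : Fin n → Fin (r + 1),
        (∫ y, eval y F * (multiShiftCoeff h α y * multiShiftCoeff h β y)) •
          ((∏ i, X i ^ (α i : ℕ)) * ∏ i, X i ^ (β i : ℕ) : MvPolynomial (Fin n) ℝ) := by
    simp only [prod_aeval_smoothedPow, Finset.mul_sum]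
    rw [← Finset.sum_comm_cycle]
    refine Finset.sum_congr rfl fun α _ ↦ Finset.sum_congr rfl fun β _ ↦ ?_
    simp only [eval_mul]
    rw [integral_finsetSum _ fun γ hγ ↦ integrable γ hγ α β, Finset.sum_smul]
    simp only [integral_const_mul, mul_smul, C_mul']
  rw [gram_sum]
  exact isSumSq_sum_sum_smul_of_posSemidef gram _

end Gram

section Nonnegative

variable {n : ℕ}

lemma exists_sum_mul_prod_add_sub_prod_le {ι κ : Type*} [Fintype κ] (s : Finset ι) (c : ι → ℝ)
    (W : ι → κ → ℝ) {ε : ℝ} (hε : 0 < ε) :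
    ∃ η > 0, ∑ a ∈ s, c a * (∏ i, (W a i + η) - ∏ i, W a i) ≤ ε := by
  have continuous : Continuous fun η : ℝ ↦ ∑ a ∈ s, c a * (∏ i, (W a i + η) - ∏ i, W a i) := by
    fun_prop
  have small : ∀ᶠ η in 𝓝[>] (0 : ℝ), ∑ a ∈ s, c a * (∏ i, (W a i + η) - ∏ i, W a i) < ε :=
    (continuous.continuousWithinAt (s := Set.Ioi 0) (x := 0)).eventually_lt_const
      (by simpa using hε)
  obtain ⟨η, hsmall, hη⟩ := (small.and self_mem_nhdsWithin).exists
  exact ⟨η, hη, hsmall.le⟩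

lemma exists_smoothedPow_approx {F : MvPolynomial (Fin n) ℝ}
    (hF : ∀ x, 0 ≤ eval x F) {η : ℝ} (hη : 0 < η) :
    ∃ p : ℕ → Polynomial ℝ,
      IsSumSq (∑ γ ∈ F.support, C (coeff γ F) * ∏ i, Polynomial.aeval (X i) (p (γ i))) ∧
      ∀ γ ∈ F.support, ∀ i, weightedNorm n (p (γ i) - Polynomial.X ^ γ i) ≤ η := by
  have degree_le (γ) (hγ : γ ∈ F.support) (i : Fin n) : γ i ≤ F.totalDegree :=
    (Finsupp.le_degree i γ).trans (le_totalDegree hγ)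
  obtain ⟨h, hh, approx⟩ := exists_weightedNorm_smoothedPow_sub_lt F.totalDegree n hη
  obtain ⟨r, approx⟩ := ((Finset.range (F.totalDegree + 1)).eventually_all.mpr
    fun k hk ↦ approx k (Finset.mem_range_succ_iff.mp hk)).exists
  refine ⟨smoothedPow h r, hh.isSumSq_sum_coeff_mul_prod_smoothedPow hF
    (fun γ hγ i ↦ ?_) r, fun γ hγ i ↦ ?_⟩
  · have := degree_le γ hγ i
    lia
  · exact (approx _ (Finset.mem_range_succ_iff.mpr (degree_le γ hγ i))).le

theorem isSOSUpTo_of_forall_eval_nonneg {F : MvPolynomial (Fin n) ℝ} (hF : ∀ x, 0 ≤ eval x F)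
    {ε : ℝ} (hε : 0 < ε) : IsSOSUpTo ε F := by
  rcases isEmpty_or_nonempty (Fin n) with _ | _
  · rw [eq_C_of_isEmpty F] at hF ⊢
    exact (IsSOSUpTo.of_isSumSq (isSumSq_C (by simpa using hF 0))).mono hε.le
  let W (k : ℕ) : ℝ := weightedNorm n (Polynomial.X ^ k)
  obtain ⟨η, hη, small⟩ := exists_sum_mul_prod_add_sub_prod_le F.support
    (fun γ ↦ n.factorial * |coeff γ F|) (fun γ i ↦ W (γ i)) hε
  obtain ⟨p, smoothed, approx⟩ := exists_smoothedPow_approx hF hη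
  have error := IsSOSUpTo.sum F.support fun γ _ ↦
    IsSOSUpTo.prod_aeval_sub_prod_aeval (coeff γ F) (fun i ↦ p (γ i)) fun i ↦ Polynomial.X ^ γ i
  have decomposition : F =
      ∑ γ ∈ F.support, C (coeff γ F) * ∏ i, Polynomial.aeval (X i) (p (γ i)) +
      ∑ γ ∈ F.support, C (coeff γ F) * (∏ i, Polynomial.aeval (X i) (.X ^ γ i : Polynomial ℝ) -
        ∏ i, Polynomial.aeval (X i) (p (γ i))) := by
    simp only [mul_sub, Finset.sum_sub_distrib, map_pow, Polynomial.aeval_X, add_sub_cancel]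
    conv_lhs => rw [F.as_sum]
    refine Finset.sum_congr rfl fun γ _ ↦ ?_
    rw [monomial_eq, Finsupp.prod_fintype _ _ fun i ↦ pow_zero _]
  rw [decomposition]
  refine ((IsSOSUpTo.of_isSumSq smoothed).add error).mono ?_
  rw [zero_add]
  refine le_trans (Finset.sum_le_sum fun γ hγ ↦ ?_) small
  gcongr with i
  · exact fun i _ ↦ add_nonneg (weightedNorm_nonneg _ _) (weightedNorm_nonneg _ _)
  · exact approx γ hγ i

end Nonnegative

section Penalty

lemma exists_forall_nonneg_add_mul {α : Type*} [TopologicalSpace α] {u v : α → ℝ}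
    (hu : Continuous u) (hv : Continuous v) (hv0 : ∀ x, 0 ≤ v x)
    (hzero : ∀ x, v x = 0 → ∀ᶠ y in 𝓝 x, 0 ≤ u y) (hinfty : ∀ᶠ x in cocompact α, 0 ≤ u x) :
    ∃ c, 0 ≤ c ∧ ∀ x, 0 ≤ u x + c * v x := by
  have locally_nonneg (x : α) : ∃ c, 0 ≤ c ∧ ∀ᶠ y in 𝓝 x, 0 ≤ u y + c * v y := by
    rcases (hv0 x).eq_or_lt with hx | hx
    · exact ⟨0, le_rfl, by simpa using hzero x hx.symm⟩
    · have positive : 0 < u x + (|u x| + 1) / v x * v x := by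
        rw [div_mul_cancel₀ _ hx.ne']
        linarith [neg_abs_le (u x)]
      have continuous : Continuous fun y ↦ u y + (|u x| + 1) / v x * v y := by fun_prop
      exact ⟨(|u x| + 1) / v x, by positivity,
        (continuous.continuousAt.eventually_const_lt positive).mono fun _ hy ↦ hy.le⟩
  have increase {c c' : ℝ} (hc : c ≤ c') {x : α} (hx : 0 ≤ u x + c * v x) :
      0 ≤ u x + c' * v x :=
    hx.trans (add_le_add_right (mul_le_mul_of_nonneg_right hc (hv0 x)) _)
  obtain ⟨K, hK, outside⟩ := mem_cocompact.mp hinfty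
  obtain ⟨c, hc, inside⟩ : ∃ c, 0 ≤ c ∧ ∀ x ∈ K, 0 ≤ u x + c * v x := by
    refine hK.induction_on ⟨0, le_rfl, by simp⟩ ?_ ?_ fun x _ ↦ ?_
    · exact fun s t hst ⟨c, hc, ht⟩ ↦ ⟨c, hc, fun x hx ↦ ht x (hst hx)⟩
    · rintro s t ⟨c, hc, hs⟩ ⟨c', -, ht⟩
      refine ⟨max c c', hc.trans (le_max_left _ _), ?_⟩
      rintro x (hx | hx)
      · exact increase (le_max_left _ _) (hs x hx)
      · exact increase (le_max_right _ _) (ht x hx)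
    · obtain ⟨c, hc, near⟩ := locally_nonneg x
      exact ⟨_, mem_nhdsWithin_of_mem_nhds near, c, hc, fun y hy ↦ hy⟩
  refine ⟨c, hc, fun x ↦ ?_⟩
  by_cases hx : x ∈ K
  · exact inside x hx
  · exact increase hc (by simpa using outside hx)

variable {n : ℕ}

lemma abs_eval_le_mul_norm_pow (f : MvPolynomial (Fin n) ℝ) {x : Fin n → ℝ} (hx : 1 ≤ ‖x‖) :
    |eval x f| ≤ (∑ γ ∈ f.support, |coeff γ f|) * ‖x‖ ^ f.totalDegree := by
  rw [eval_eq', Finset.sum_mul]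
  refine (Finset.abs_sum_le_sum_abs _ _).trans (Finset.sum_le_sum fun γ hγ ↦ ?_)
  rw [abs_mul, Finset.abs_prod]
  refine mul_le_mul_of_nonneg_left ?_ (abs_nonneg _)
  calc ∏ i, |x i ^ γ i|
      ≤ ∏ i, ‖x‖ ^ γ i := Finset.prod_le_prod (fun i _ ↦ abs_nonneg _) fun i _ ↦ by
        rw [abs_pow]
        exact pow_le_pow_left₀ (abs_nonneg _) (norm_le_pi_norm x i) _
    _ = ‖x‖ ^ γ.degree := by rw [Finset.prod_pow_eq_pow_sum, Finsupp.degree_eq_sum]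
    _ ≤ ‖x‖ ^ f.totalDegree := pow_le_pow_right₀ hx (le_totalDegree hγ)

lemma norm_pow_div_factorial_le_eval_theta [Nonempty (Fin n)] {k r : ℕ} (hk : k ≤ r)
    (x : Fin n → ℝ) : ‖x‖ ^ (2 * k) / k.factorial ≤ eval x (theta n r) := by
  have nonneg (k : ℕ) (i : Fin n) : 0 ≤ 1 / (k.factorial : ℝ) * x i ^ (2 * k) := by
    have := (even_two_mul k).pow_nonneg (x i)
    positivity
  obtain ⟨i, hi⟩ : ∃ i, ‖x i‖ = ‖x‖ := by
    obtain ⟨i, hi⟩ := Finite.exists_max fun i ↦ ‖x i‖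
    exact ⟨i, (norm_le_pi_norm x i).antisymm ((pi_norm_le_iff_of_nonempty x).mpr hi)⟩
  have eval_theta : eval x (theta n r) =
      ∑ k ∈ Finset.range (r + 1), ∑ i, 1 / (k.factorial : ℝ) * x i ^ (2 * k) := by
    simp [theta]
  calc ‖x‖ ^ (2 * k) / k.factorial
      = 1 / (k.factorial : ℝ) * x i ^ (2 * k) := by
        rw [← hi, Real.norm_eq_abs, (even_two_mul k).pow_abs, one_div_mul_eq_div]
    _ ≤ ∑ i, 1 / (k.factorial : ℝ) * x i ^ (2 * k) :=
        Finset.single_le_sum (fun i _ ↦ nonneg k i) (Finset.mem_univ i)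
    _ ≤ ∑ k ∈ Finset.range (r + 1), ∑ i, 1 / (k.factorial : ℝ) * x i ^ (2 * k) :=
        Finset.single_le_sum
          (f := fun k : ℕ ↦ ∑ i, 1 / (k.factorial : ℝ) * x i ^ (2 * k))
          (fun k _ ↦ Finset.sum_nonneg fun i _ ↦ nonneg k i) (Finset.mem_range_succ_iff.mpr hk)
    _ = eval x (theta n r) := eval_theta.symm

lemma eventually_cocompact_eval_add_theta_nonneg (f : MvPolynomial (Fin n) ℝ) {ε : ℝ}
    (hε : 0 < ε) :
    ∀ᶠ x in cocompact (Fin n → ℝ), 0 ≤ eval x (f + C ε * theta n (f.totalDegree + 1)) := by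
  rcases isEmpty_or_nonempty (Fin n) with _ | _
  · simp [cocompact_eq_bot]
  set A := ∑ γ ∈ f.support, |coeff γ f|
  set d := f.totalDegree
  filter_upwards [tendsto_norm_cocompact_atTop.eventually_ge_atTop 1,
    tendsto_norm_cocompact_atTop.eventually_ge_atTop (A * (d + 1).factorial / ε)] with x hx hAx
  have dominated : |eval x f| ≤ ε * eval x (theta n (d + 1)) := by
    rw [div_le_iff₀ hε, ← le_div_iff₀ (by positivity)] at hAx
    calc |eval x f|
        ≤ A * ‖x‖ ^ d := abs_eval_le_mul_norm_pow f hx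
      _ ≤ ‖x‖ * ε / (d + 1).factorial * ‖x‖ ^ d := by gcongr
      _ = ε * (‖x‖ ^ (d + 1) / (d + 1).factorial) := by ring
      _ ≤ ε * (‖x‖ ^ (2 * (d + 1)) / (d + 1).factorial) := by
          gcongr
          lia
      _ ≤ ε * eval x (theta n (d + 1)) := by
          gcongr
          exact norm_pow_div_factorial_le_eval_theta le_rfl x
  simp only [eval_add, eval_mul, eval_C]
  linarith [neg_abs_le (eval x f)]

lemma exists_eval_add_theta_add_penalty_nonneg {m : ℕ} {g : Fin m → MvPolynomial (Fin n) ℝ}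
    {f : MvPolynomial (Fin n) ℝ}
    (hf : ∀ x : Fin n → ℝ, (∀ j, eval x (g j) = 0) → 0 ≤ eval x f) {ε : ℝ} (hε : 0 < ε) :
    ∃ (r : ℕ) (c : ℝ), 0 ≤ c ∧
      ∀ x, 0 ≤ eval x (f + C ε * theta n r + ∑ j, C c * g j ^ 2) := by
  set u := f + C ε * theta n (f.totalDegree + 1)
  have locally_nonneg (x : Fin n → ℝ) (hx : ∑ j, eval x (g j) ^ 2 = 0) :
      ∀ᶠ y in 𝓝 x, 0 ≤ eval y u := by
    have eval_g (j) : eval x (g j) = 0 := pow_eq_zero_iff two_ne_zero |>.mp <|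
      (Finset.sum_eq_zero_iff_of_nonneg fun j _ ↦ sq_nonneg _).mp hx j (Finset.mem_univ j)
    have hfx := hf x eval_g
    rcases isEmpty_or_nonempty (Fin n) with _ | _
    · refine .of_forall fun y ↦ ?_
      rw [Subsingleton.elim y x]
      simpa [u, theta] using hfx
    · have theta_pos : 0 < eval x (theta n (f.totalDegree + 1)) :=
        one_pos.trans_le (by simpa using norm_pow_div_factorial_le_eval_theta (Nat.zero_le _) x)
      refine ((continuous_eval u).continuousAt.eventually_const_lt ?_).mono fun _ hy ↦ hy.le
      simp only [u, eval_add, eval_mul, eval_C]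
      positivity
  obtain ⟨c, hc, nonneg⟩ := exists_forall_nonneg_add_mul (continuous_eval u)
    (v := fun x ↦ ∑ j, eval x (g j) ^ 2)
    (continuous_finsetSum _ fun j _ ↦ (continuous_eval (g j)).pow 2)
    (fun x ↦ Finset.sum_nonneg fun j _ ↦ sq_nonneg _) locally_nonneg
    (eventually_cocompact_eval_add_theta_nonneg f hε)
  refine ⟨f.totalDegree + 1, c, hc, fun x ↦ ?_⟩
  simpa only [u, eval_add, eval_sum, eval_mul, eval_C, eval_pow, Finset.mul_sum] using nonneg x

end Penalty

theorem sos_approx_on_algebraic_set (n m : ℕ) (g : Fin m → MvPolynomial (Fin n) ℝ)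
    (f : MvPolynomial (Fin n) ℝ)
    (hf : ∀ x : Fin n → ℝ, (∀ j, eval x (g j) = 0) → 0 ≤ eval x f) :
    ∀ ε : ℝ, 0 < ε →
      ∃ (r₀ : ℕ) (lam : Fin m → ℝ), (∀ j, 0 ≤ lam j) ∧
        ∀ r : ℕ, r₀ ≤ r →
          IsSOS (f + C ε * theta n r + ∑ j, C (lam j) * g j ^ 2) := by
  intro ε hε
  obtain ⟨s, c, hc, nonneg⟩ := exists_eval_add_theta_add_penalty_nonneg hf (half_pos hε)
  have sos_upto := isSOSUpTo_of_forall_eval_nonneg nonneg (half_pos hε)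
  obtain ⟨r₀, sos⟩ := eventually_atTop.mp (sos_upto.and (eventually_ge_atTop s))
  refine ⟨r₀, fun _ ↦ c, fun _ ↦ hc, fun r hr ↦ isSOS_of_isSumSq ?_⟩
  obtain ⟨isSumSq, hsr⟩ := sos r hr
  have halves : (C ε : MvPolynomial (Fin n) ℝ) = C (ε / 2) + C (ε / 2) := by
    rw [← C_add, add_halves]
  convert! isSumSq.add ((isSumSq_C (half_pos hε).le).mul (isSumSq_theta_sub_theta hsr)) using 1
  rw [halves]
  ring
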